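/- arXiv:2004.01762 — 2 statements merged into one kernel-verified Lean document; each statement's English description precedes it below -/
import Mathlib

section
/- On any oriented pseudo-Riemannian manifold of dimension 2k, the Pontrjagin potential computed from the Weyl tensor equals the one computed from the full Riemann tensor: p_Φ(W) = p_Φ(Rm), where p_Φ(A) := (1/(2k)!) ε^{i₁…i_{2k}} Φ^{t₁…t_k}_{s₁…s_k} A_{t₁}{}^{s₁}{}_{i₁i₂} ⋯ A_{t_k}{}^{s_k}{}_{i_{2k-1}i_{2k}} for any algebraic curvature tensor A. -/
open scoped BigOperators

noncomputable def kron {n : ℕ} (i j : Fin n) : ℝ := if i = j then 1 else 0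

/-- Components of the volume form in an oriented orthonormal frame. -/
noncomputable def vol {n : ℕ} (i : Fin n → Fin n) : ℝ :=
  Matrix.det (Matrix.of fun a b => kron (i a) b)

def d0 {k : ℕ} (a : Fin k) : Fin (2 * k) := ⟨2 * a.val, by have := a.isLt; omega⟩
def d1 {k : ℕ} (a : Fin k) : Fin (2 * k) := ⟨2 * a.val + 1, by have := a.isLt; omega⟩

/-- The Pontrjagin potential `p_Φ(A)` of an algebraic curvature tensor `A` in
dimension `2k`. -/
noncomputable def pPhi {k : ℕ}
    (Φ : (Fin k → Fin (2 * k)) → (Fin k → Fin (2 * k)) → ℝ)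
    (A : Fin (2 * k) → Fin (2 * k) → Fin (2 * k) → Fin (2 * k) → ℝ) : ℝ :=
  (1 / (Nat.factorial (2 * k) : ℝ)) *
    ∑ J : Fin (2 * k) → Fin (2 * k), vol J *
      ∑ t : Fin k → Fin (2 * k), ∑ s : Fin k → Fin (2 * k),
        Φ t s * ∏ a : Fin k, A (t a) (s a) (J (d0 a)) (J (d1 a))

theorem kron_move {n k : ℕ} (v : Fin k) (c c' : Fin n) (G : (Fin k → Fin n) → ℝ)
    (hG : ∀ t x, G (Function.update t v x) = G t) :
    ∑ t : Fin k → Fin n, kron (t v) c * G t = ∑ t : Fin k → Fin n, kron (t v) c' * G t := by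
  have inv : Function.Involutive
      (fun t : Fin k → Fin n => Function.update t v (Equiv.swap c c' (t v))) := by
    intro t
    simp
  refine Fintype.sum_equiv inv.toPerm _ _ ?_
  intro t
  simp only [Function.Involutive.coe_toPerm, hG, Function.update_self]
  congr 1
  unfold kron
  have : Equiv.swap c c' (t v) = c' ↔ t v = c := by
    rw [Equiv.swap_apply_eq_iff, Equiv.swap_apply_right]
  simp [this]

theorem vol_comp {n : ℕ} (σ : Equiv.Perm (Fin n)) (hσ : Equiv.Perm.sign σ = 1)
    (J : Fin n → Fin n) : vol (J ∘ σ) = vol J := by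
  have := Matrix.det_permute σ (Matrix.of fun a b => kron (J a) b)
  rw [hσ] at this
  unfold vol
  simpa [Matrix.submatrix] using this

theorem sum_cyc {n : ℕ} (σ : Equiv.Perm (Fin n)) (hσ : Equiv.Perm.sign σ = 1)
    (F : (Fin n → Fin n) → ℝ) (hF : ∀ J, F J + F (J ∘ σ) + F (J ∘ σ ∘ σ) = 0) :
    ∑ J, vol J * F J = 0 := by
  have h : ∀ F : (Fin n → Fin n) → ℝ, ∑ J, vol J * F (J ∘ σ) = ∑ J, vol J * F J := by
    intro F
    refine Fintype.sum_equiv (Equiv.arrowCongr σ.symm (Equiv.refl _)) _ _ ?_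
    intro J
    have : (Equiv.arrowCongr σ.symm (Equiv.refl (Fin n))) J = J ∘ σ := by
      ext a; simp [Equiv.arrowCongr]
    rw [this, vol_comp σ hσ]
  have h1 := h F
  have h2 := h (fun J => F (J ∘ σ))
  have h3 : ∑ J, vol J * (F J + F (J ∘ σ) + F (J ∘ σ ∘ σ)) = 0 := by simp [hF]
  simp only [mul_add, Finset.sum_add_distrib] at h3
  simp only [Function.comp_assoc] at h2
  linarith

theorem key {n k : ℕ} (B : Fin n → Fin n → Fin n → Fin n → ℝ)
    (hB : ∀ i j a b, B i j a b + B a j b i + B b j i a = 0)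
    (p q r : Fin n) (hpq : p ≠ q) (hqr : q ≠ r) (hpr : p ≠ r)
    (v w : Fin k) (hvw : w ≠ v) (G : (Fin n → Fin n) → (Fin k → Fin n) → ℝ)
    (hG1 : ∀ J J' t, (∀ x, x ≠ p → x ≠ q → x ≠ r → J x = J' x) → G J t = G J' t)
    (hG2 : ∀ J t x, G J (Function.update t v x) = G J t) :
    ∑ J : Fin n → Fin n, vol J * ∑ t : Fin k → Fin n,
      kron (t v) (J p) * (B (t v) (t w) (J q) (J r) * G J t) = 0 := by
  have hs : Equiv.Perm.sign (Equiv.swap p q * Equiv.swap q r) = 1 := by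
    rw [Equiv.Perm.sign_mul, Equiv.Perm.sign_swap hpq, Equiv.Perm.sign_swap hqr]; simp
  generalize hσ : Equiv.swap p q * Equiv.swap q r = σ at hs
  have sp : σ p = q := by
    rw [← hσ]; simp [Equiv.swap_apply_of_ne_of_ne hpq hpr]
  have sq : σ q = r := by
    rw [← hσ]; simp [Equiv.swap_apply_of_ne_of_ne hpr.symm hqr.symm]
  have sr : σ r = p := by
    rw [← hσ]; simp
  have so : ∀ x, x ≠ p → x ≠ q → x ≠ r → σ x = x := by
    intro x h1 h2 h3
    rw [← hσ]; simp [Equiv.swap_apply_of_ne_of_ne, h1, h2, h3]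
  apply sum_cyc σ hs
  intro J
  have e1 : ∀ t, G (J ∘ σ) t = G J t := fun t => hG1 _ _ t (by
    intro x h1 h2 h3; simp [so x h1 h2 h3])
  have e2 : ∀ t, G (J ∘ σ ∘ σ) t = G J t := fun t => hG1 _ _ t (by
    intro x h1 h2 h3; simp [so x h1 h2 h3])
  have hk : ∀ c a b, ∑ t : Fin k → Fin n, kron (t v) c * (B (t v) (t w) a b * G J t)
      = ∑ t : Fin k → Fin n, kron (t v) (J p) * (B c (t w) a b * G J t) := by
    intro c a b
    rw [← kron_move v c (J p) (fun t => B c (t w) a b * G J t)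
      (by intro t x; simp [hG2, Function.update_of_ne hvw])]
    refine Finset.sum_congr rfl fun t _ => ?_
    by_cases h : t v = c
    · rw [h]
    · simp [kron, h]
  simp only [e1, e2, Function.comp_apply, sp, sq, sr, hk]
  rw [← Finset.sum_add_distrib, ← Finset.sum_add_distrib]
  refine Finset.sum_eq_zero fun t _ => ?_
  linear_combination (kron (t v) (J p) * G J t) * hB (J p) (t w) (J q) (J r)

noncomputable def Sfun {k : ℕ} (τ : Equiv.Perm (Fin k))
    (B : Fin k → Fin (2 * k) → Fin (2 * k) → Fin (2 * k) → Fin (2 * k) → ℝ) : ℝ :=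
  ∑ J : Fin (2 * k) → Fin (2 * k), vol J * ∑ t : Fin k → Fin (2 * k),
    ∏ a : Fin k, B a (t a) (t (τ a)) (J (d0 a)) (J (d1 a))

theorem d0_inj {k : ℕ} {a b : Fin k} (h : a ≠ b) : d0 a ≠ d0 b := by
  intro e; apply h; simp [d0] at e; exact Fin.ext e
theorem d1_inj {k : ℕ} {a b : Fin k} (h : a ≠ b) : d1 a ≠ d1 b := by
  intro e; apply h; simp [d1] at e; exact Fin.ext e
theorem d01 {k : ℕ} (a b : Fin k) : d0 a ≠ d1 b := by
  intro e; simp [d0, d1] at e; omega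

theorem combine {A' A x1 x2 y1 y2 : ℝ} (h1 : x1 = 0) (h2 : x2 = 0) (h3 : y1 = 0)
    (h4 : y2 = 0) (h : A' = A + x1 - x2 - y1 + y2) : A' = A := by
  linarith

theorem step {k : ℕ} (τ : Equiv.Perm (Fin k)) (hτ : ∀ a, τ a ≠ a)
    (B B' : Fin k → Fin (2 * k) → Fin (2 * k) → Fin (2 * k) → Fin (2 * k) → ℝ)
    (hA : ∀ x i j a b, B x i j a b = - B x j i a b)
    (hB : ∀ x i j a b, B x i j a b + B x a j b i + B x b j i a = 0)
    (a0 : Fin k) (hBB : ∀ a, a ≠ a0 → B' a = B a)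
    (P : Fin (2 * k) → Fin (2 * k) → ℝ)
    (hd : ∀ i j a b, B' a0 i j a b = B a0 i j a b + P i a * kron j b - P i b * kron j a
      + P j b * kron i a - P j a * kron i b) :
    Sfun τ B' = Sfun τ B := by
  have split : ∀ (b0 : Fin k), b0 ≠ a0 → ∀ f : Fin k → ℝ,
      ∏ a, f a = f a0 * (f b0 * ∏ a ∈ (Finset.univ.erase a0).erase b0, f a) := by
    intro b0 hb f
    rw [Finset.mul_prod_erase _ _ (by simp [hb]), Finset.mul_prod_erase _ _ (by simp)]
  set b0 := τ a0 with hb0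
  have hb : b0 ≠ a0 := hτ a0
  set c0 := τ.symm a0 with hc0
  have hτc : τ c0 = a0 := by simp [hc0]
  have hc : c0 ≠ a0 := fun h => hτ a0 (by rw [h] at hτc; exact hτc)
  let rest : Fin k → (Fin (2 * k) → Fin (2 * k)) → (Fin k → Fin (2 * k)) → ℝ := fun b J t =>
    ∏ a ∈ (Finset.univ.erase a0).erase b, B a (t a) (t (τ a)) (J (d0 a)) (J (d1 a))
  have restJ : ∀ b p, (p = d0 a0 ∨ p = d1 a0) → ∀ J J' t,
      (∀ x, x ≠ p → x ≠ d0 b → x ≠ d1 b → J x = J' x) → rest b J t = rest b J' t := by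
    intro b p hp J J' t h
    refine Finset.prod_congr rfl fun a ha => ?_
    simp only [Finset.mem_erase, Finset.mem_univ, and_true] at ha
    obtain ⟨h1, h2⟩ := ha
    rw [h (d0 a) (by rcases hp with rfl | rfl; exacts [d0_inj h2, d01 _ _]) (d0_inj h1) (d01 _ _),
      h (d1 a) (by rcases hp with rfl | rfl; exacts [(d01 _ _).symm, d1_inj h2])
        (d01 _ _).symm (d1_inj h1)]
  -- the X terms
  have X : ∀ p p', ((p = d0 a0 ∧ p' = d1 a0) ∨ (p = d1 a0 ∧ p' = d0 a0)) →
      ∑ J : Fin (2 * k) → Fin (2 * k), vol J * ∑ t : Fin k → Fin (2 * k),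
      kron (t b0) (J p) * (B b0 (t b0) (t (τ b0)) (J (d0 b0)) (J (d1 b0)) *
        (P (t a0) (J p') * rest b0 J t)) = 0 := by
    intro p p' hp
    refine key (B b0) (hB b0) p (d0 b0) (d1 b0) ?_ (d01 _ _) ?_ b0 (τ b0) (hτ b0)
      (fun J t => P (t a0) (J p') * rest b0 J t) ?_ ?_
    · rcases hp with ⟨rfl, rfl⟩ | ⟨rfl, rfl⟩
      exacts [d0_inj hb.symm, (d01 _ _).symm]
    · rcases hp with ⟨rfl, rfl⟩ | ⟨rfl, rfl⟩
      exacts [d01 _ _, d1_inj hb.symm]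
    · intro J J' t h
      have := restJ b0 p (by tauto) J J' t h
      have h' : J p' = J' p' := by
        rcases hp with ⟨rfl, rfl⟩ | ⟨rfl, rfl⟩
        · exact h _ (d01 _ _).symm (d01 _ _).symm (d1_inj hb.symm)
        · exact h _ (d01 _ _) (d0_inj hb.symm) (d01 _ _)
      simp only [this, h']
    · intro J t x
      simp only [Function.update_of_ne hb.symm]
      congr 1
      refine Finset.prod_congr rfl fun a ha => ?_
      simp only [Finset.mem_erase, Finset.mem_univ, and_true] at ha
      rw [Function.update_of_ne ha.1, Function.update_of_ne]
      intro h
      exact ha.2 (τ.injective (h.trans hb0))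
  have Y : ∀ p p', ((p = d0 a0 ∧ p' = d1 a0) ∨ (p = d1 a0 ∧ p' = d0 a0)) →
      ∑ J : Fin (2 * k) → Fin (2 * k), vol J * ∑ t : Fin k → Fin (2 * k),
      kron (t a0) (J p) * (B c0 (t a0) (t c0) (J (d0 c0)) (J (d1 c0)) *
        (P (t b0) (J p') * rest c0 J t)) = 0 := by
    intro p p' hp
    refine key (B c0) (hB c0) p (d0 c0) (d1 c0) ?_ (d01 _ _) ?_ a0 c0 hc
      (fun J t => P (t b0) (J p') * rest c0 J t) ?_ ?_
    · rcases hp with ⟨rfl, rfl⟩ | ⟨rfl, rfl⟩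
      exacts [d0_inj hc.symm, (d01 _ _).symm]
    · rcases hp with ⟨rfl, rfl⟩ | ⟨rfl, rfl⟩
      exacts [d01 _ _, d1_inj hc.symm]
    · intro J J' t h
      have := restJ c0 p (by tauto) J J' t h
      have h' : J p' = J' p' := by
        rcases hp with ⟨rfl, rfl⟩ | ⟨rfl, rfl⟩
        · exact h _ (d01 _ _).symm (d01 _ _).symm (d1_inj hc.symm)
        · exact h _ (d01 _ _) (d0_inj hc.symm) (d01 _ _)
      simp only [this, h']
    · intro J t x
      simp only [Function.update_of_ne hb]
      congr 1
      refine Finset.prod_congr rfl fun a ha => ?_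
      simp only [Finset.mem_erase, Finset.mem_univ, and_true] at ha
      rw [Function.update_of_ne ha.2, Function.update_of_ne]
      intro h
      exact ha.1 (τ.injective (h.trans hτc.symm))
  have X1 := X (d1 a0) (d0 a0) (Or.inr ⟨rfl, rfl⟩)
  have X2 := X (d0 a0) (d1 a0) (Or.inl ⟨rfl, rfl⟩)
  have Y1 := Y (d0 a0) (d1 a0) (Or.inl ⟨rfl, rfl⟩)
  have Y2 := Y (d1 a0) (d0 a0) (Or.inr ⟨rfl, rfl⟩)
  refine combine X1 X2 Y1 Y2 ?_
  unfold Sfun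
  simp only [← Finset.sum_add_distrib, ← Finset.sum_sub_distrib, ← mul_add, ← mul_sub]
  refine Finset.sum_congr rfl fun J _ => ?_
  congr 1
  refine Finset.sum_congr rfl fun t _ => ?_
  -- compare products
  have q1 : ∀ b, b ≠ a0 → ∏ a, B' a (t a) (t (τ a)) (J (d0 a)) (J (d1 a)) =
      B' a0 (t a0) (t b0) (J (d0 a0)) (J (d1 a0)) *
        (B b (t b) (t (τ b)) (J (d0 b)) (J (d1 b)) * rest b J t) := by
    intro b hb'
    rw [split b hb', hBB b hb']
    congr 2
    refine Finset.prod_congr rfl fun a ha => ?_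
    simp only [Finset.mem_erase, Finset.mem_univ, and_true] at ha
    rw [hBB a ha.2]
  have q2 : ∀ b, b ≠ a0 → ∏ a, B a (t a) (t (τ a)) (J (d0 a)) (J (d1 a)) =
      B a0 (t a0) (t b0) (J (d0 a0)) (J (d1 a0)) *
        (B b (t b) (t (τ b)) (J (d0 b)) (J (d1 b)) * rest b J t) := fun b hb' => split b hb' _
  have r1 := split b0 hb (fun a => if a = a0 then 1 else B a (t a) (t (τ a)) (J (d0 a)) (J (d1 a)))
  have r2 := split c0 hc (fun a => if a = a0 then 1 else B a (t a) (t (τ a)) (J (d0 a)) (J (d1 a)))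
  have rr : ∀ b, ∏ a ∈ (Finset.univ.erase a0).erase b,
      (if a = a0 then 1 else B a (t a) (t (τ a)) (J (d0 a)) (J (d1 a))) = rest b J t := by
    intro b
    refine Finset.prod_congr rfl fun a ha => ?_
    simp only [Finset.mem_erase, Finset.mem_univ, and_true] at ha
    rw [if_neg ha.2]
  rw [r1, rr, rr] at r2
  simp only [if_true, if_neg hb, if_neg hc, one_mul, hτc] at r2
  rw [hA c0] at r2
  rw [q1 b0 hb, q2 b0 hb, hd]
  linear_combination (P (t b0) (J (d1 a0)) * kron (t a0) (J (d0 a0))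
    - P (t b0) (J (d0 a0)) * kron (t a0) (J (d1 a0))) * r2

theorem Sfun_eq {k : ℕ} (τ : Equiv.Perm (Fin k))
    (R W : Fin (2 * k) → Fin (2 * k) → Fin (2 * k) → Fin (2 * k) → ℝ)
    (hAR : ∀ i j a b, R i j a b = - R j i a b)
    (hAW : ∀ i j a b, W i j a b = - W j i a b)
    (hBR : ∀ i j a b, R i j a b + R a j b i + R b j i a = 0)
    (hBW : ∀ i j a b, W i j a b + W a j b i + W b j i a = 0)
    (P : Fin (2 * k) → Fin (2 * k) → ℝ)
    (hd : ∀ i j a b, R i j a b = W i j a b + P i a * kron j b - P i b * kron j a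
      + P j b * kron i a - P j a * kron i b) :
    Sfun τ (fun _ => R) = Sfun τ (fun _ => W) := by
  by_cases hτ : ∀ a, τ a ≠ a
  · have : ∀ s : Finset (Fin k), Sfun τ (fun a => if a ∈ s then R else W)
        = Sfun τ (fun _ => W) := by
      intro s
      induction s using Finset.induction_on with
      | empty => simp
      | insert a0 s ha ih =>
        rw [← ih]
        refine step τ hτ _ _ ?_ ?_ a0 ?_ P ?_
        · intro x i j a b
          split_ifs
          exacts [hAR _ _ _ _, hAW _ _ _ _]
        · intro x i j a b
          split_ifs
          exacts [hBR _ _ _ _, hBW _ _ _ _]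
        · intro a h
          simp [h]
        · intro i j a b
          simp [ha, hd]
    simpa using this Finset.univ
  · push Not at hτ
    obtain ⟨a, ha⟩ := hτ
    have z : ∀ A : Fin (2 * k) → Fin (2 * k) → Fin (2 * k) → Fin (2 * k) → ℝ,
        (∀ i j a b, A i j a b = - A j i a b) → Sfun τ (fun _ => A) = 0 := by
      intro A h
      unfold Sfun
      refine Finset.sum_eq_zero fun J _ => ?_
      rw [Finset.sum_eq_zero, mul_zero]
      intro t _
      refine Finset.prod_eq_zero (Finset.mem_univ a) ?_
      rw [ha]
      linarith [h (t a) (t a) (J (d0 a)) (J (d1 a))]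
    rw [z R hAR, z W hAW]

theorem pPhi_eq {k : ℕ} (Φ : (Fin k → Fin (2 * k)) → (Fin k → Fin (2 * k)) → ℝ)
    (c : Equiv.Perm (Fin k) → ℝ) (hc : ∀ t s,
      Φ t s = ∑ τ : Equiv.Perm (Fin k), c τ * ∏ a : Fin k, kron (t (τ a)) (s a))
    (A : Fin (2 * k) → Fin (2 * k) → Fin (2 * k) → Fin (2 * k) → ℝ) :
    pPhi Φ A = (1 / (Nat.factorial (2 * k) : ℝ)) * ∑ τ, c τ * Sfun τ (fun _ => A) := by
  unfold pPhi Sfun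
  congr 1
  simp only [Finset.mul_sum]
  symm
  rw [Finset.sum_comm]
  refine Finset.sum_congr rfl fun J _ => ?_
  rw [Finset.sum_comm]
  refine Finset.sum_congr rfl fun t _ => ?_
  simp only [hc, Finset.sum_mul, Finset.mul_sum]
  rw [Finset.sum_comm]
  refine Finset.sum_congr rfl fun τ _ => ?_
  rw [Finset.sum_eq_single (fun a => t (τ a))]
  · simp [kron]; ring
  · intro s _ hs
    obtain ⟨a, ha⟩ := Function.ne_iff.mp hs
    rw [Finset.prod_eq_zero (Finset.mem_univ a) (f := fun a => kron (t (τ a)) (s a))]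
    · simp
    · simp [kron, Ne.symm ha]
  · simp

/-- on any oriented pseudo-Riemannian manifold of dimension `2k`,
`p_Φ(W) = p_Φ(Rm)`: the Pontrjagin potential of the Weyl tensor equals that of the
full Riemann tensor `R = W + P ⩕ g` (Kulkarni–Nomizu product with the Schouten
tensor `P`); pointwise in an oriented orthonormal frame. -/
theorem pPhi_weyl_eq_pPhi_riemann (k : ℕ)
    (Φ : (Fin k → Fin (2 * k)) → (Fin k → Fin (2 * k)) → ℝ)
    (hΦinv : ∃ c : Equiv.Perm (Fin k) → ℝ, ∀ t s,
      Φ t s = ∑ τ : Equiv.Perm (Fin k), c τ * ∏ a : Fin k, kron (t (τ a)) (s a))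
    (hΦsym : ∀ (σ : Equiv.Perm (Fin k)) t s, Φ (t ∘ σ) (s ∘ σ) = Φ t s)
    (W : Fin (2 * k) → Fin (2 * k) → Fin (2 * k) → Fin (2 * k) → ℝ)
    (hW1 : ∀ a b c d, W a b c d = - W b a c d)
    (hW2 : ∀ a b c d, W a b c d = - W a b d c)
    (hW3 : ∀ a b c d, W a b c d = W c d a b)
    (hWB : ∀ a b c d, W a b c d + W b c a d + W c a b d = 0)
    (hWtf : ∀ a c, ∑ s, W a s c s = 0)
    (P : Fin (2 * k) → Fin (2 * k) → ℝ) (hP : ∀ i j, P i j = P j i) :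
    pPhi Φ (fun i j a b => W i j a b + P i a * kron j b - P i b * kron j a
      + P j b * kron i a - P j a * kron i b) = pPhi Φ W := by
  obtain ⟨c, hc⟩ := hΦinv
  rw [pPhi_eq Φ c hc, pPhi_eq Φ c hc]
  have hBW : ∀ i j a b, W i j a b + W a j b i + W b j i a = 0 := by
    intro i j a b
    linarith [hWB a b i j, hW3 a b i j, hW3 b i a j, hW3 i a b j]
  have kc : ∀ i j : Fin (2 * k), kron i j = kron j i := by
    intro i j; simp [kron, eq_comm]
  congr 1
  refine Finset.sum_congr rfl fun τ _ => ?_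
  congr 1
  refine Sfun_eq τ _ W ?_ hW1 ?_ hBW P (fun _ _ _ _ => rfl)
  · intro i j a b
    linarith [hW1 i j a b]
  · intro i j a b
    rw [kc a i, kc b i, kc b a, hP a i, hP b i, hP b a]
    linarith [hBW i j a b]
end

section
/- In dimension n = 2k, define Ω^{(k)} by (Ω^{(k)})_i^j := Σ_{ℓ=0}^{k−1} 4^{k−ℓ} (1/(ℓ!(k−ℓ))) δ^{j j₁…j_{k+ℓ}}_{i i₁…i_{k+ℓ}} W_{j₁j₂}{}^{i₁i₂} ⋯ W_{j_{2ℓ−1}j_{2ℓ}}{}^{i_{2ℓ−1}i_{2ℓ}} P_{j_{2ℓ+1}}^{i_{2ℓ+1}} ⋯ P_{j_{k+ℓ}}^{i_{k+ℓ}}. Then tr Ω^{(k)} = Pf^{(k)}(Rm) − Pf^{(k)}(W), where Pf^{(k)}(A) := (1/k!) δ^{j₁…j_{2k}}_{i₁…i_{2k}} A_{j₁j₂}{}^{i₁i₂} ⋯ A_{j_{2k-1}j_{2k}}{}^{i_{2k-1}i_{2k}}. -/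
open scoped BigOperators

noncomputable def gdelta {n m : ℕ} (j i : Fin m → Fin n) : ℝ :=
  Matrix.det (Matrix.of fun a b => kron (j a) (i b))

/-- `Pf^{(k)}(A)`. -/
noncomputable def PfA {n k : ℕ} (A : Fin n → Fin n → Fin n → Fin n → ℝ) : ℝ :=
  (1 / (Nat.factorial k : ℝ)) *
    ∑ js : Fin (2 * k) → Fin n, ∑ is : Fin (2 * k) → Fin n,
      gdelta js is * ∏ a : Fin k, A (js (d0 a)) (js (d1 a)) (is (d0 a)) (is (d1 a))

/-- The tensor `(Ω^{(k)})_i^j = Σ_{ℓ=0}^{k−1} 4^{k−ℓ} (1/(ℓ!(k−ℓ)))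
`δ^{j j₁…j_{k+ℓ}}_{i i₁…i_{k+ℓ}} W_{j₁j₂}{}^{i₁i₂} ⋯ W_{j_{2ℓ−1}j_{2ℓ}}{}^{i_{2ℓ−1}i_{2ℓ}}
P_{j_{2ℓ+1}}^{i_{2ℓ+1}} ⋯ P_{j_{k+ℓ}}^{i_{k+ℓ}}` (orthonormal frame). -/
noncomputable def OmegaT {n k : ℕ} (W : Fin n → Fin n → Fin n → Fin n → ℝ)
    (P : Fin n → Fin n → ℝ) (i j : Fin n) : ℝ :=
  ∑ ℓ : Fin k, (4 : ℝ) ^ (k - ℓ.val) * (1 / ((Nat.factorial ℓ.val : ℝ) * ((k : ℝ) - (ℓ.val : ℝ)))) *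
    ∑ js : Fin (k + ℓ.val) → Fin n, ∑ is : Fin (k + ℓ.val) → Fin n,
      gdelta (Fin.cons j js) (Fin.cons i is) *
        (∏ a : Fin ℓ.val,
          W (js ⟨2 * a.val, by have := a.isLt; have := ℓ.isLt; omega⟩)
            (js ⟨2 * a.val + 1, by have := a.isLt; have := ℓ.isLt; omega⟩)
            (is ⟨2 * a.val, by have := a.isLt; have := ℓ.isLt; omega⟩)
            (is ⟨2 * a.val + 1, by have := a.isLt; have := ℓ.isLt; omega⟩)) *
        (∏ b : Fin (k - ℓ.val),
          P (js ⟨2 * ℓ.val + b.val, by have := b.isLt; have := ℓ.isLt; omega⟩)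
            (is ⟨2 * ℓ.val + b.val, by have := b.isLt; have := ℓ.isLt; omega⟩))

noncomputable def gd {n : ℕ} {ι : Type} [Fintype ι] [DecidableEq ι] (j i : ι → Fin n) : ℝ :=
  Matrix.det (Matrix.of fun a b => kron (j a) (i b))

noncomputable def SS {n : ℕ} {ι : Type} [Fintype ι] [DecidableEq ι]
    (Φ : (ι → Fin n) → (ι → Fin n) → ℝ) : ℝ :=
  ∑ js : ι → Fin n, ∑ is : ι → Fin n, gd js is * Φ js is

section gen
variable {n : ℕ} {ι κ : Type} [Fintype ι] [DecidableEq ι] [Fintype κ] [DecidableEq κ]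

theorem gd_reindex (e : ι ≃ κ) (j i : κ → Fin n) : gd (j ∘ e) (i ∘ e) = gd j i := by
  unfold gd
  rw [← Matrix.det_submatrix_equiv_self e]
  rfl

theorem SS_reindex (e : ι ≃ κ) (Φ : (ι → Fin n) → (ι → Fin n) → ℝ) :
    SS Φ = SS (fun js is : κ → Fin n => Φ (js ∘ e) (is ∘ e)) := by
  unfold SS
  symm
  refine Fintype.sum_equiv (e.symm.arrowCongr (Equiv.refl _)) _ _ fun js => ?_
  refine Fintype.sum_equiv (e.symm.arrowCongr (Equiv.refl _)) _ _ fun is => ?_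
  have : ∀ f : κ → Fin n, (e.symm.arrowCongr (Equiv.refl (Fin n))) f = f ∘ e := by
    intro f; ext x; simp
  rw [this, this, gd_reindex]

theorem SS_add (Φ Ψ : (ι → Fin n) → (ι → Fin n) → ℝ) :
    SS (fun js is => Φ js is + Ψ js is) = SS Φ + SS Ψ := by
  simp [SS, mul_add, Finset.sum_add_distrib]

theorem SS_smul (c : ℝ) (Φ : (ι → Fin n) → (ι → Fin n) → ℝ) :
    SS (fun js is => c * Φ js is) = c * SS Φ := by
  simp only [SS, Finset.mul_sum]
  refine Finset.sum_congr rfl fun _ _ => Finset.sum_congr rfl fun _ _ => by ring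

theorem SS_sum {τ : Type} (s : Finset τ) (Φ : τ → (ι → Fin n) → (ι → Fin n) → ℝ) :
    SS (fun js is => ∑ t ∈ s, Φ t js is) = ∑ t ∈ s, SS (Φ t) := by
  classical
  induction s using Finset.induction_on with
  | empty => simp [SS]
  | insert a s ha ih => simp only [Finset.sum_insert ha, SS_add, ih]

theorem gd_swap_right {x y : ι} (h : x ≠ y) (j i : ι → Fin n) :
    gd j (i ∘ Equiv.swap x y) = - gd j i := by
  unfold gd
  have := Matrix.det_permute' (Equiv.swap x y) (Matrix.of fun a b => kron (j a) (i b))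
  rw [Equiv.Perm.sign_swap h] at this
  simp only [Units.val_neg, Units.val_one, Int.cast_neg, Int.cast_one, neg_mul, one_mul] at this
  rw [← this]; rfl

theorem gd_swap_left {x y : ι} (h : x ≠ y) (j i : ι → Fin n) :
    gd (j ∘ Equiv.swap x y) i = - gd j i := by
  unfold gd
  have := Matrix.det_permute (Equiv.swap x y) (Matrix.of fun a b => kron (j a) (i b))
  rw [Equiv.Perm.sign_swap h] at this
  simp only [Units.val_neg, Units.val_one, Int.cast_neg, Int.cast_one, neg_mul, one_mul] at this
  rw [← this]; rfl

theorem SS_swap_right {x y : ι} (h : x ≠ y) (Φ : (ι → Fin n) → (ι → Fin n) → ℝ) :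
    SS (fun js is => Φ js (is ∘ Equiv.swap x y)) = - SS Φ := by
  unfold SS
  rw [← Finset.sum_neg_distrib]
  refine Finset.sum_congr rfl fun js _ => ?_
  rw [← Finset.sum_neg_distrib]
  refine Fintype.sum_equiv ((Equiv.swap x y).arrowCongr (Equiv.refl _)) _ _ fun is => ?_
  have : ((Equiv.swap x y).arrowCongr (Equiv.refl (Fin n))) is = is ∘ Equiv.swap x y := by
    ext z; simp
  rw [this, gd_swap_right h]; ring

theorem SS_swap_left {x y : ι} (h : x ≠ y) (Φ : (ι → Fin n) → (ι → Fin n) → ℝ) :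
    SS (fun js is => Φ (js ∘ Equiv.swap x y) is) = - SS Φ := by
  unfold SS
  rw [← Finset.sum_neg_distrib]
  refine Fintype.sum_equiv ((Equiv.swap x y).arrowCongr (Equiv.refl _)) _ _ fun js => ?_
  have : ((Equiv.swap x y).arrowCongr (Equiv.refl (Fin n))) js = js ∘ Equiv.swap x y := by
    ext z; simp
  rw [this, ← Finset.sum_neg_distrib]
  refine Finset.sum_congr rfl fun is _ => ?_
  rw [gd_swap_left h]; ring

theorem SS_slot {x y : ι} (h : x ≠ y) (T : Fin n → Fin n → Fin n → Fin n → ℝ) (P : Fin n → Fin n → ℝ)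
    (Ψ : (ι → Fin n) → (ι → Fin n) → ℝ)
    (h1 : ∀ js is, Ψ js (is ∘ Equiv.swap x y) = Ψ js is)
    (h2 : ∀ js is, Ψ (js ∘ Equiv.swap x y) is = Ψ js is) :
    SS (fun js is => (T (js x) (js y) (is x) (is y) + P (js x) (is x) * kron (js y) (is y)
        - P (js x) (is y) * kron (js y) (is x) + P (js y) (is y) * kron (js x) (is x)
        - P (js y) (is x) * kron (js x) (is y)) * Ψ js is)
     = SS (fun js is => (T (js x) (js y) (is x) (is y)
        + 4 * (P (js x) (is x) * kron (js y) (is y))) * Ψ js is) := by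
  set A : (ι → Fin n) → (ι → Fin n) → ℝ := fun js is => P (js x) (is x) * kron (js y) (is y) * Ψ js is
    with hA
  set B : (ι → Fin n) → (ι → Fin n) → ℝ := fun js is => P (js x) (is y) * kron (js y) (is x) * Ψ js is
    with hB
  set C : (ι → Fin n) → (ι → Fin n) → ℝ := fun js is => P (js y) (is y) * kron (js x) (is x) * Ψ js is
    with hC
  set D : (ι → Fin n) → (ι → Fin n) → ℝ := fun js is => P (js y) (is x) * kron (js x) (is y) * Ψ js is
    with hD
  have eB : SS B = - SS A := by
    rw [← SS_swap_right h A]; congr 1; funext js is; simp [hA, hB, h1]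
  have eD : SS D = - SS A := by
    rw [← SS_swap_left h A]; congr 1; funext js is; simp [hA, hD, h2]
  have eC : SS C = SS A := by
    rw [← neg_neg (SS A), ← eB, ← SS_swap_left h B]; congr 1; funext js is; simp [hB, hC, h2]
  have e1 := SS_add (fun js is => T (js x) (js y) (is x) (is y) * Ψ js is) (fun js is => 4 * A js is)
  have e2 : SS (fun js is => T (js x) (js y) (is x) (is y) * Ψ js is +
      (A js is + ((-1) * B js is + (C js is + (-1) * D js is))))
      = SS (fun js is => T (js x) (js y) (is x) (is y) * Ψ js is) + 4 * SS A := by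
    rw [SS_add, SS_add, SS_add, SS_add, SS_smul, SS_smul, eB, eC, eD]
    ring
  rw [SS_smul] at e1
  trans SS (fun js is => T (js x) (js y) (is x) (is y) * Ψ js is) + 4 * SS A
  · rw [← e2]; congr 1; funext js is; simp only [hA, hB, hC, hD]; ring
  · rw [← e1]; congr 1; funext js is; simp only [hA]; ring

end gen

theorem gd_contract {n m : ℕ} (js is : Fin m → Fin n) :
    ∑ c : Fin n, gd (Fin.cons c js : Fin (m+1) → Fin n) (Fin.cons c is : Fin (m+1) → Fin n)
      = ((n : ℝ) - m) * gd js is := by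
  unfold gd
  simp only [Matrix.det_apply']
  rw [Finset.sum_comm]
  rw [← Equiv.sum_comp Equiv.Perm.decomposeFin.symm, Fintype.sum_prod_type, Fin.sum_univ_succ]
  simp only [Equiv.Perm.decomposeFin.symm_sign, Fin.prod_univ_succ, Matrix.of_apply,
    Equiv.Perm.decomposeFin_symm_apply_zero, Equiv.Perm.decomposeFin_symm_apply_succ,
    Fin.cons_zero, Fin.cons_succ, Equiv.swap_self, Equiv.refl_apply]
  rw [sub_mul]
  have key : ∀ a : Fin m, ∀ e : Equiv.Perm (Fin m),
      ∑ c : Fin n, (kron (js a) c * ∏ x, kron ((Fin.cons c js : Fin (m+1) → Fin n)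
        ((Equiv.swap 0 a.succ) (e x).succ)) (is x)) = ∏ x, kron (js (e x)) (is x) := by
    intro a e
    rw [Finset.sum_eq_single (js a)]
    · simp only [kron, if_true, one_mul]
      refine Finset.prod_congr rfl fun x _ => ?_
      by_cases hx : e x = a
      · simp [hx]
      · rw [Equiv.swap_apply_of_ne_of_ne (Fin.succ_ne_zero _) (by simpa using hx)]
        simp
    · intro c _ hc
      simp [kron, Ne.symm hc]
    · simp
  have h0 : ∀ c : Fin n, kron c c = 1 := by simp [kron]
  simp only [h0, if_true, one_mul, Fin.succ_ne_zero, if_false]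
  simp only [← Finset.mul_sum, key, Finset.sum_const, Finset.card_univ, Fintype.card_fin,
    nsmul_eq_mul]
  push_cast
  simp only [neg_mul, one_mul, Finset.sum_neg_distrib, mul_neg]
  rw [sub_eq_add_neg]
  simp only [Finset.mul_sum, ← Finset.sum_neg_distrib]
  congr 1 <;> refine Finset.sum_congr rfl fun x _ => by ring

theorem SS_contract_fin {n m : ℕ} (Φ : (Fin m → Fin n) → (Fin m → Fin n) → ℝ) :
    SS (fun js is : Fin (m+1) → Fin n => kron (js 0) (is 0) * Φ (Fin.tail js) (Fin.tail is))
      = ((n : ℝ) - m) * SS Φ := by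
  unfold SS
  rw [← Equiv.sum_comp (Fin.consEquiv (fun _ => Fin n)), Fintype.sum_prod_type, Finset.sum_comm,
    Finset.mul_sum]
  refine Finset.sum_congr rfl fun js _ => ?_
  have : ∀ c : Fin n, ∑ is : Fin (m+1) → Fin n,
      gd ((Fin.consEquiv (fun _ => Fin n)) (c, js)) is *
      (kron (((Fin.consEquiv (fun _ => Fin n)) (c, js)) 0) (is 0) *
        Φ (Fin.tail ((Fin.consEquiv (fun _ => Fin n)) (c, js))) (Fin.tail is))
      = ∑ is : Fin m → Fin n, gd (Fin.cons c js : Fin (m+1) → Fin n) (Fin.cons c is : Fin (m+1) → Fin n) * Φ js is := by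
    intro c
    rw [← Equiv.sum_comp (Fin.consEquiv (fun _ => Fin n)), Fintype.sum_prod_type, Finset.sum_comm]
    refine Finset.sum_congr rfl fun is _ => ?_
    rw [Finset.sum_eq_single c]
    · simp [Fin.consEquiv, kron]
    · intro d _ hd
      simp [Fin.consEquiv, kron, Ne.symm hd]
    · simp
  simp only [this]
  rw [Finset.sum_comm, Finset.mul_sum]
  refine Finset.sum_congr rfl fun is _ => ?_
  rw [← Finset.sum_mul, gd_contract]; ring

theorem SS_contract_option {n : ℕ} {ι : Type} [Fintype ι] [DecidableEq ι]
    (Φ : (ι → Fin n) → (ι → Fin n) → ℝ) :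
    SS (fun js is : Option ι → Fin n => kron (js none) (is none) * Φ (js ∘ some) (is ∘ some))
      = ((n : ℝ) - Fintype.card ι) * SS Φ := by
  have e := Fintype.equivFin ι
  rw [SS_reindex e Φ, ← SS_contract_fin,
    SS_reindex ((Equiv.optionCongr e).trans (finSuccEquiv _).symm)]
  congr 1

theorem SS_contract {n : ℕ} {ι : Type} [Fintype ι] [DecidableEq ι]
    (Φ : (ι → Fin n) → (ι → Fin n) → ℝ) (q : ℕ) : ∀ r : ℕ, n = Fintype.card ι + q + r →
    (r.factorial : ℝ) * SS (fun js is : ι ⊕ Fin q → Fin n =>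
        (∏ b, kron (js (Sum.inr b)) (is (Sum.inr b)))
        * Φ (js ∘ Sum.inl) (is ∘ Sum.inl)) = ((q + r).factorial : ℝ) * SS Φ := by
  induction q with
  | zero =>
    intro r hr
    rw [SS_reindex (Equiv.sumEmpty ι (Fin 0)).symm Φ] 
    simp only [Finset.univ_eq_empty, Finset.prod_empty, one_mul, zero_add]
    rfl
  | succ q ih =>
    intro r hr
    have := ih (r+1) (by omega)
    have hc := SS_contract_option (fun js is : ι ⊕ Fin q → Fin n =>
        (∏ b, kron (js (Sum.inr b)) (is (Sum.inr b))) * Φ (js ∘ Sum.inl) (is ∘ Sum.inl))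
    let f : Option (ι ⊕ Fin q) → ι ⊕ Fin (q+1) := fun o => o.elim (Sum.inr 0)
      (Sum.elim Sum.inl (fun b => Sum.inr b.succ))
    have hf : Function.Bijective f := by
      rw [Fintype.bijective_iff_injective_and_card]
      constructor
      · rintro (_ | _ | _) (_ | _ | _) h <;> simp_all [f]
        exact (Fin.succ_ne_zero _ h.symm)
      · simp; omega
    rw [SS_reindex (Equiv.ofBijective f hf)] at hc
    rw [show q + 1 + r = q + (r + 1) by omega, ← this, Nat.factorial_succ]
    have h2 : ((n : ℝ) - Fintype.card (ι ⊕ Fin q)) = r + 1 := by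
      rw [hr]; simp; ring
    rw [h2] at hc
    push_cast
    rw [mul_comm ((r:ℝ)+1), mul_assoc, ← hc]
    congr 2
    funext js is
    rw [Fin.prod_univ_succ, mul_assoc]
    rfl

section main
variable {n k : ℕ}

theorem d0_ne_d1 (a : Fin k) : d0 a ≠ d1 a := by
  simp [d0, d1]

theorem SS_replace (W : Fin n → Fin n → Fin n → Fin n → ℝ) (P : Fin n → Fin n → ℝ)
    (s : Finset (Fin k)) :
    SS (fun js is : Fin (2*k) → Fin n => ∏ a : Fin k,
      (fun i j c d => W i j c d + P i c * kron j d - P i d * kron j c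
          + P j d * kron i c - P j c * kron i d) (js (d0 a)) (js (d1 a)) (is (d0 a)) (is (d1 a)))
    = SS (fun js is : Fin (2*k) → Fin n => ∏ a : Fin k,
      (if a ∈ s then W (js (d0 a)) (js (d1 a)) (is (d0 a)) (is (d1 a))
          + 4 * (P (js (d0 a)) (is (d0 a)) * kron (js (d1 a)) (is (d1 a))) else
      (fun i j c d => W i j c d + P i c * kron j d - P i d * kron j c
          + P j d * kron i c - P j c * kron i d) (js (d0 a)) (js (d1 a)) (is (d0 a)) (is (d1 a)))) := by
  induction s using Finset.induction_on with
  | empty => simp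
  | insert a s ha ih =>
    rw [ih]
    simp only [← Finset.mul_prod_erase Finset.univ _ (Finset.mem_univ a)]
    simp only [ha, if_false, Finset.mem_insert_self, if_true]
    have hsw : ∀ b ∈ Finset.univ.erase a, ∀ f : Fin (2*k) → Fin n,
        (f ∘ Equiv.swap (d0 a) (d1 a)) (d0 b) = f (d0 b) ∧
        (f ∘ Equiv.swap (d0 a) (d1 a)) (d1 b) = f (d1 b) := by
      intro b hb f
      have hne : b.val ≠ a.val := fun h => (Finset.ne_of_mem_erase hb) (Fin.ext h)
      constructor <;> simp only [Function.comp] <;>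
        rw [Equiv.swap_apply_of_ne_of_ne] <;> simp only [d0, d1, ne_eq, Fin.mk.injEq] <;> omega
    rw [SS_slot (d0_ne_d1 a)]
    · congr 1; funext js is
      congr 1
      refine Finset.prod_congr rfl fun b hb => ?_
      simp [Finset.ne_of_mem_erase hb]
    · intro js is
      refine Finset.prod_congr rfl fun b hb => ?_
      rw [(hsw b hb is).1, (hsw b hb is).2]
    · intro js is
      refine Finset.prod_congr rfl fun b hb => ?_
      rw [(hsw b hb js).1, (hsw b hb js).2]

/-- reduced term -/
noncomputable def HH (W : Fin n → Fin n → Fin n → Fin n → ℝ) (P : Fin n → Fin n → ℝ)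
    (ℓ m : ℕ) : ℝ :=
  SS (fun js is : (Fin ℓ ⊕ Fin ℓ) ⊕ Fin m → Fin n =>
    (∏ a : Fin ℓ, W (js (Sum.inl (Sum.inl a))) (js (Sum.inl (Sum.inr a)))
       (is (Sum.inl (Sum.inl a))) (is (Sum.inl (Sum.inr a)))) *
    ∏ b : Fin m, P (js (Sum.inr b)) (is (Sum.inr b)))

theorem SS_subset (hn : n = 2 * k) (W : Fin n → Fin n → Fin n → Fin n → ℝ)
    (P : Fin n → Fin n → ℝ) (t : Finset (Fin k)) :
    SS (fun js is : Fin (2*k) → Fin n =>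
      (∏ a ∈ t, W (js (d0 a)) (js (d1 a)) (is (d0 a)) (is (d1 a))) *
      ∏ a ∈ Finset.univ \ t, (4 * (P (js (d0 a)) (is (d0 a)) * kron (js (d1 a)) (is (d1 a)))))
    = (4:ℝ) ^ (k - t.card) * ((k - t.card).factorial * HH W P t.card (k - t.card)) := by
  have htk : t.card ≤ k := by simpa using Finset.card_le_univ t
  have htc : tᶜ.card = k - t.card := by simp [Finset.card_compl]
  generalize hl : t.card = ℓ at *
  generalize hm : k - ℓ = m at *
  let e := finSumEquivOfFinset hl htc
  have he1 : ∀ x, e (Sum.inl x) ∈ t := by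
    intro x; simp only [e, finSumEquivOfFinset_inl]; exact Finset.orderEmbOfFin_mem _ _ _
  have he2 : ∀ x, e (Sum.inr x) ∉ t := by
    intro x; simp only [e, finSumEquivOfFinset_inr]
    exact Finset.mem_compl.1 (Finset.orderEmbOfFin_mem _ _ _)
  have p1 : ∀ f : Fin k → ℝ, ∏ a ∈ t, f a = ∏ x : Fin ℓ, f (e (Sum.inl x)) := by
    intro f
    rw [← Fintype.prod_ite_mem, ← Equiv.prod_comp e, Fintype.prod_sum_type]
    simp [he1, he2]
  have p2 : ∀ f : Fin k → ℝ, ∏ a ∈ Finset.univ \ t, f a = ∏ x : Fin m, f (e (Sum.inr x)) := by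
    intro f
    rw [← Fintype.prod_ite_mem, ← Equiv.prod_comp e, Fintype.prod_sum_type]
    simp [he1, he2]
  simp only [p1, p2]
  have hc := SS_contract (n := n) (fun js is : (Fin ℓ ⊕ Fin ℓ) ⊕ Fin m → Fin n =>
    (∏ a : Fin ℓ, W (js (Sum.inl (Sum.inl a))) (js (Sum.inl (Sum.inr a)))
       (is (Sum.inl (Sum.inl a))) (is (Sum.inl (Sum.inr a)))) *
    ∏ b : Fin m, P (js (Sum.inr b)) (is (Sum.inr b))) m 0 (by simp; omega)
  rw [Nat.factorial_zero, Nat.cast_one, one_mul, add_zero] at hc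
  unfold HH
  rw [← hc]
  let f : ((Fin ℓ ⊕ Fin ℓ) ⊕ Fin m) ⊕ Fin m → Fin (2*k) :=
    Sum.elim (Sum.elim (Sum.elim (fun x => d0 (e (Sum.inl x))) (fun x => d1 (e (Sum.inl x))))
      (fun x => d0 (e (Sum.inr x)))) (fun x => d1 (e (Sum.inr x)))
  have i0 : ∀ a b : Fin k, d0 a = d0 b ↔ a = b := by
    intro a b; simp [d0, Fin.ext_iff]
  have i1 : ∀ a b : Fin k, d1 a = d1 b ↔ a = b := by
    intro a b; simp [d1, Fin.ext_iff]
  have i2 : ∀ a b : Fin k, ¬ d0 a = d1 b := by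
    intro a b; simp [d0, d1, Fin.ext_iff]; omega
  have i3 : ∀ a b : Fin k, ¬ d1 a = d0 b := by
    intro a b; simp [d0, d1, Fin.ext_iff]; omega
  have hf : Function.Bijective f := by
    rw [Fintype.bijective_iff_injective_and_card]
    constructor
    · rintro (((_ | _) | _) | _) (((_ | _) | _) | _) h <;> simp_all [f]
    · simp; omega
  rw [SS_reindex (Equiv.ofBijective f hf), ← SS_smul]
  congr 1
  funext js is
  simp only [Finset.prod_mul_distrib, Finset.prod_const, Finset.card_univ, Fintype.card_fin]
  simp only [Function.comp, Equiv.ofBijective_apply, f, Sum.elim_inl, Sum.elim_inr]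
  ring

theorem Omega_term (hn : n = 2 * k) (W : Fin n → Fin n → Fin n → Fin n → ℝ)
    (P : Fin n → Fin n → ℝ) (ℓ : Fin k) :
    ∑ i : Fin n, ∑ js : Fin (k + ℓ.val) → Fin n, ∑ is : Fin (k + ℓ.val) → Fin n,
      gdelta (Fin.cons i js) (Fin.cons i is) *
        (∏ a : Fin ℓ.val,
          W (js ⟨2 * a.val, by have := a.isLt; have := ℓ.isLt; omega⟩)
            (js ⟨2 * a.val + 1, by have := a.isLt; have := ℓ.isLt; omega⟩)
            (is ⟨2 * a.val, by have := a.isLt; have := ℓ.isLt; omega⟩)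
            (is ⟨2 * a.val + 1, by have := a.isLt; have := ℓ.isLt; omega⟩)) *
        (∏ b : Fin (k - ℓ.val),
          P (js ⟨2 * ℓ.val + b.val, by have := b.isLt; have := ℓ.isLt; omega⟩)
            (is ⟨2 * ℓ.val + b.val, by have := b.isLt; have := ℓ.isLt; omega⟩))
    = ((k : ℝ) - ℓ.val) * HH W P ℓ.val (k - ℓ.val) := by
  have hlt := ℓ.isLt
  let f : (Fin ℓ.val ⊕ Fin ℓ.val) ⊕ Fin (k - ℓ.val) → Fin (k + ℓ.val) :=
    Sum.elim (Sum.elim (fun a => ⟨2 * a.val, by have := a.isLt; omega⟩)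
      (fun a => ⟨2 * a.val + 1, by have := a.isLt; omega⟩))
      (fun b => ⟨2 * ℓ.val + b.val, by have := b.isLt; omega⟩)
  have hf : Function.Bijective f := by
    rw [Fintype.bijective_iff_injective_and_card]
    constructor
    · rintro ((a | a) | a) ((b | b) | b) h <;> have ha := a.isLt <;> have hb := b.isLt <;>
        simp [f, Fin.ext_iff] at h ⊢ <;> omega
    · simp; omega
  unfold HH
  rw [SS_reindex (Equiv.ofBijective f hf)]
  unfold SS
  rw [Finset.sum_comm, Finset.mul_sum]
  refine Finset.sum_congr rfl fun js _ => ?_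
  rw [Finset.sum_comm, Finset.mul_sum]
  refine Finset.sum_congr rfl fun is _ => ?_
  simp only [mul_assoc]
  rw [← Finset.sum_mul]
  have := gd_contract js is
  have h2 : ((n : ℝ) - (k + ℓ.val : ℕ)) = (k : ℝ) - ℓ.val := by
    rw [hn]; push_cast; ring
  rw [h2] at this
  rw [← mul_assoc (_ - _), ← this]
  rfl

end main

/-- in dimension `n = 2k`, `tr Ω^{(k)} = Pf^{(k)}(Rm) − Pf^{(k)}(W)`,
where `R = W + P ⩕ g` is the decomposition of the Riemann tensor into its Weyl part
and the Kulkarni–Nomizu product of the Schouten tensor with the metric. -/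
theorem trace_Omega (k : ℕ)
    (W : Fin (2 * k) → Fin (2 * k) → Fin (2 * k) → Fin (2 * k) → ℝ)
    (hW1 : ∀ a b c d, W a b c d = - W b a c d)
    (hW2 : ∀ a b c d, W a b c d = - W a b d c)
    (hW3 : ∀ a b c d, W a b c d = W c d a b)
    (hWB : ∀ a b c d, W a b c d + W b c a d + W c a b d = 0)
    (hWtf : ∀ a c, ∑ s, W a s c s = 0)
    (P : Fin (2 * k) → Fin (2 * k) → ℝ) (hP : ∀ i j, P i j = P j i) :
    ∑ i, OmegaT (k := k) W P i i
      = PfA (k := k) (fun i j a b => W i j a b + P i a * kron j b - P i b * kron j a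
          + P j b * kron i a - P j a * kron i b)
        - PfA (k := k) W := by
  have hR : ∀ A : Fin (2 * k) → Fin (2 * k) → Fin (2 * k) → Fin (2 * k) → ℝ,
      PfA (k := k) A = (1 / (Nat.factorial k : ℝ)) *
        SS (fun js is : Fin (2*k) → Fin (2*k) =>
          ∏ a : Fin k, A (js (d0 a)) (js (d1 a)) (is (d0 a)) (is (d1 a))) := fun A => rfl
  have hWk : SS (fun js is : Fin (2*k) → Fin (2*k) =>
          ∏ a : Fin k, W (js (d0 a)) (js (d1 a)) (is (d0 a)) (is (d1 a))) = HH W P k 0 := by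
    have := SS_subset rfl W P (Finset.univ : Finset (Fin k))
    simpa using this
  have hRR : SS (fun js is : Fin (2*k) → Fin (2*k) => ∏ a : Fin k,
      (fun i j c d => W i j c d + P i c * kron j d - P i d * kron j c
          + P j d * kron i c - P j c * kron i d) (js (d0 a)) (js (d1 a)) (is (d0 a)) (is (d1 a)))
      = ∑ ℓ ∈ Finset.range (k + 1), (k.choose ℓ : ℝ) *
        ((4:ℝ) ^ (k - ℓ) * ((k - ℓ).factorial * HH W P ℓ (k - ℓ))) := by
    rw [SS_replace W P Finset.univ]
    simp only [Finset.mem_univ, if_true, Finset.prod_add]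
    rw [SS_sum]
    simp only [SS_subset rfl W P]
    have := Finset.sum_powerset_apply_card
      (fun ℓ => (4:ℝ) ^ (k - ℓ) * ((k - ℓ).factorial * HH W P ℓ (k - ℓ)))
      (x := (Finset.univ : Finset (Fin k)))
    simpa using this
  rw [hR, hR, hRR, hWk, Finset.sum_range_succ]
  unfold OmegaT
  rw [Finset.sum_comm]
  simp only [← Finset.mul_sum, Omega_term rfl W P]
  rw [Finset.sum_range]
  simp only [Nat.choose_self, Nat.sub_self, pow_zero, Nat.factorial_zero, Nat.cast_one, one_mul]
  rw [mul_add, add_sub_cancel_right, Finset.mul_sum]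
  refine Finset.sum_congr rfl fun ℓ _ => ?_
  have hlt := ℓ.isLt
  have hch : ((k.choose ℓ.val : ℕ) : ℝ) * (ℓ.val.factorial : ℝ) * ((k - ℓ.val).factorial : ℝ)
      = (k.factorial : ℝ) := by
    exact_mod_cast Nat.choose_mul_factorial_mul_factorial hlt.le
  have h1 : (k : ℝ) - ℓ.val ≠ 0 := by
    have : (ℓ.val : ℝ) < k := by exact_mod_cast hlt
    linarith
  have h2 : (ℓ.val.factorial : ℝ) ≠ 0 := by exact_mod_cast Nat.factorial_ne_zero _
  have h3 : (k.factorial : ℝ) ≠ 0 := by exact_mod_cast Nat.factorial_ne_zero _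
  field_simp
  rw [← hch]
  ring
end
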